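/- arXiv:2405.17367 — 2 statements merged into one kernel-verified Lean document; each statement's English description precedes it below -/
import Mathlib

section
/- Let X, Y be Banach spaces with Y compactly embedded in X, and let {U_σ(t,s)}_{σ∈Σ} be a system of evolution processes on X with Σ = H_Ξ(g) the hull of some g ∈ Ξ, where {θ_t}_{t∈ℝ} is a group of continuous maps of Ξ such that (t,σ) ↦ θ_tσ is continuous. Assume the system has a closed bounded uniformly absorbing set 𝓑 and satisfies hypotheses (H2) uniform smoothing on 𝓑, (H3) uniform Hölder continuity on 𝓑 with exponents γ, θ ∈ (0,1], (H4) Lipschitz driving group: d_Ξ(θ_tξ₁,θ_tξ₂) ≤ P e^{ζt} d_Ξ(ξ₁,ξ₂) for t ≥ 0, and (H5) Lipschitz dependence on the symbol: ‖U_{σ₁}(t,0)x − U_{σ₂}(t,0)x‖ ≤ L(t) d_Ξ(σ₁,σ₂) for t ≥ 1, x ∈ 𝓑, with 1 ≤ L(t) ≤ c₁e^{βt}. Suppose the process {U_g(t,s)} has a pullback attractor {A_g(t)}_{t∈ℝ}, and that there exists a compact θ-invariant set Σ₋ ⊆ Ξ of finite box-counting dimension with α(g) ⊆ Σ₋ and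 constants η₁ > 0, C ≥ 1 such that dist(θ_t g, Σ₋) ≤ C e^{η₁ t} for all t ∈ ℝ. Then for every T ∈ ℝ, the set ⋃_{t ≤ T} A_g(t) has finite box-counting dimension. -/
/-!
A set has finite box-counting dimension iff its covering number grows at most polynomially in
`1 / r`. Iterating the smoothing property for a time `p` of order `log (1 / r)` covers each
`U_σ(p,0)𝓑` by polynomially many `r`-balls, and every section of the attractor satisfies
`A(t) ⊆ U_{θ_{t-p} g}(p,0)𝓑`, so it remains to cover the set of symbols or of times involved.

Split `⋃_{t ≤ T} A(t)` at a time `a` of size polynomial in `1 / r`. Before `a`, the symbols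
`θ_{t-p} g` are within a power `r ^ j` of `Σ₋`, and a cover of `Σ₋` at that scale is good enough
because the Lipschitz constant `e^{βp}` of the dependence on the symbol is polynomial in `1 / r`.
After `a`, Hölder continuity in time reduces the problem to covering the interval `[a, T]` at a
scale which is a power of `r`. Since `a` may be this large, an algebraic rate of approach to `Σ₋`
already suffices.
-/

open Filter Set Metric Bornology
open scoped ENNReal NNReal Topology

noncomputable def coverN {X : Type*} [MetricSpace X] (K : Set X) (r : ℝ) : ℝ≥0∞ :=
  sInf {n : ℝ≥0∞ | ∃ s : Finset X, (s.card : ℝ≥0∞) = n ∧ K ⊆ ⋃ x ∈ s, Metric.ball x r}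

noncomputable def dimBox {X : Type*} [MetricSpace X] (K : Set X) : ℝ≥0∞ :=
  Filter.limsup (fun r : ℝ =>
    if coverN K r = ⊤ then (⊤ : ℝ≥0∞)
    else ENNReal.ofReal (Real.log (coverN K r).toReal / (-Real.log r)))
    (nhdsWithin 0 (Set.Ioi 0))

structure EvolSystem (X : Type*) (Ξ : Type*) [MetricSpace X] [MetricSpace Ξ] where
  th : ℝ → Ξ → Ξ
  th_cont : ∀ t, Continuous (th t)
  th_zero : th 0 = id
  th_add : ∀ t s, th t ∘ th s = th (t + s)
  Sg : Set Ξ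
  Sg_compact : IsCompact Sg
  Sg_inv : ∀ t, th t '' Sg = Sg
  U : Ξ → ℝ → ℝ → X → X
  U_cont : ∀ σ ∈ Sg, ∀ t s : ℝ, s ≤ t → Continuous (U σ t s)
  U_id : ∀ σ ∈ Sg, ∀ s : ℝ, U σ s s = id
  U_comp : ∀ σ ∈ Sg, ∀ t s r : ℝ, r ≤ s → s ≤ t → U σ t s ∘ U σ s r = U σ t r
  U_jointCont : ∀ σ ∈ Sg, ∀ x : X,
    ContinuousOn (fun p : ℝ × ℝ => U σ p.1 p.2 x) {p : ℝ × ℝ | p.2 ≤ p.1}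
  translation : ∀ σ ∈ Sg, ∀ h t s : ℝ, s ≤ t → U (th h σ) t s = U σ (t + h) (s + h)

def IsPullbackAttractor {X : Type*} [MetricSpace X] (U : ℝ → ℝ → X → X) (A : ℝ → Set X) : Prop :=
  (∀ t, IsCompact (A t)) ∧ Bornology.IsBounded (⋃ t : ℝ, A t) ∧
  (∀ t s : ℝ, s ≤ t → U t s '' A s = A t) ∧
  (∀ B : Set X, Bornology.IsBounded B → ∀ t : ℝ, ∀ ε > 0, ∃ s₀ ≤ t, ∀ s ≤ s₀,
     ∀ x ∈ B, Metric.infDist (U t s x) (A t) ≤ ε)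

section CoveringNumber

variable {X : Type*} [MetricSpace X] {K K' : Set X} {r δ : ℝ}

theorem coverN_le_card {s : Finset X} (hs : K ⊆ ⋃ x ∈ s, ball x r) : coverN K r ≤ s.card :=
  sInf_le ⟨s, rfl, hs⟩

theorem exists_finset_card_eq_coverN (h : coverN K r ≠ ⊤) :
    ∃ s : Finset X, (s.card : ℝ≥0∞) = coverN K r ∧ K ⊆ ⋃ x ∈ s, ball x r := by
  have hne : {s : Finset X | K ⊆ ⋃ x ∈ s, ball x r}.Nonempty := by
    obtain ⟨_, ⟨s, -, hs⟩, -⟩ := sInf_lt_iff.1 (lt_top_iff_ne_top.2 h)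
    exact ⟨s, hs⟩
  obtain ⟨s, hs, hmin⟩ := exists_minimalFor_of_wellFoundedLT _ Finset.card hne
  refine ⟨s, le_antisymm (le_sInf ?_) (coverN_le_card hs), hs⟩
  rintro _ ⟨s', rfl, hs'⟩
  exact_mod_cast (le_total s.card s'.card).elim id fun h' ↦ hmin hs' h'

theorem coverN_le_of_finset_cover {X' : Type*} [MetricSpace X'] {L : Set X'} {ρ : ℝ} (f : X' → X)
    (h : ∀ s : Finset X', L ⊆ ⋃ x ∈ s, ball x ρ → K ⊆ ⋃ x ∈ s, ball (f x) r) :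
    coverN K r ≤ coverN L ρ := by
  classical
  rcases eq_or_ne (coverN L ρ) ⊤ with htop | hfin
  · exact htop ▸ le_top
  obtain ⟨s, hcard, hs⟩ := exists_finset_card_eq_coverN hfin
  calc coverN K r ≤ (s.image f).card := coverN_le_card (by simpa using h s hs)
    _ ≤ s.card := by exact_mod_cast Finset.card_image_le
    _ = coverN L ρ := hcard

theorem coverN_mono (h : K ⊆ K') : coverN K r ≤ coverN K' r :=
  coverN_le_of_finset_cover id fun _ ↦ h.trans

theorem coverN_antitone (K : Set X) : Antitone (coverN K) := fun _ _ h ↦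
  coverN_le_of_finset_cover id fun _ hs ↦
    hs.trans (iUnion₂_mono fun _ _ ↦ ball_subset_ball h)

theorem coverN_le_one (c : X) (h : K ⊆ ball c r) : coverN K r ≤ 1 := by
  simpa using coverN_le_card (s := {c}) (by simpa using h)

@[simp]
theorem coverN_empty : coverN (∅ : Set X) r = 0 := by
  simpa using coverN_le_card (s := ∅) (empty_subset (⋃ x ∈ (∅ : Finset X), ball x r))

theorem coverN_ne_top (hK : TotallyBounded K) (hr : 0 < r) : coverN K r ≠ ⊤ := by
  obtain ⟨s, hfin, hs⟩ := Metric.totallyBounded_iff.1 hK r hr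
  exact ne_top_of_le_ne_top (ENNReal.natCast_ne_top _)
    (coverN_le_card (s := hfin.toFinset) (by simpa using hs))

theorem coverN_union_le (K K' : Set X) (r : ℝ) :
    coverN (K ∪ K') r ≤ coverN K r + coverN K' r := by
  classical
  by_cases h : coverN K r = ⊤ ∨ coverN K' r = ⊤
  · rw [ENNReal.add_eq_top.2 h]
    exact le_top
  obtain ⟨hK, hK'⟩ := not_or.1 h
  obtain ⟨s, hcard, hs⟩ := exists_finset_card_eq_coverN hK
  obtain ⟨s', hcard', hs'⟩ := exists_finset_card_eq_coverN hK'
  calc coverN (K ∪ K') r ≤ (s ∪ s').card := coverN_le_card <| by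
        rw [Finset.set_biUnion_union]
        exact union_subset_union hs hs'
    _ ≤ s.card + s'.card := by exact_mod_cast Finset.card_union_le s s'
    _ = coverN K r + coverN K' r := by rw [hcard, hcard']

theorem coverN_biUnion_finset_le {ι : Type*} (s : Finset ι) (F : ι → Set X) (r : ℝ) :
    coverN (⋃ i ∈ s, F i) r ≤ ∑ i ∈ s, coverN (F i) r := by
  classical
  induction s using Finset.induction_on with
  | empty => simp
  | insert i s hi ih =>
    rw [Finset.set_biUnion_insert, Finset.sum_insert hi]
    exact (coverN_union_le _ _ r).trans (by gcongr)

theorem coverN_le_of_forall_exists_dist_le (h : ∀ x ∈ K, ∃ y ∈ K', dist x y ≤ δ) :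
    coverN K (r + δ) ≤ coverN K' r := by
  refine coverN_le_of_finset_cover id fun s hs x hx ↦ ?_
  obtain ⟨y, hy, hxy⟩ := h x hx
  obtain ⟨c, hc, hyc⟩ := mem_iUnion₂.1 (hs hy)
  refine mem_iUnion₂.2 ⟨c, hc, mem_ball.2 ?_⟩
  rw [id]
  linarith [dist_triangle x y c, mem_ball.1 hyc]

theorem coverN_image_le_of_lipschitzWith {X' : Type*} [MetricSpace X'] {c : ℝ≥0} {f : X' → X}
    (hf : LipschitzWith c f) (hc : c ≠ 0) (L : Set X') (ρ : ℝ) :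
    coverN (f '' L) (c * ρ) ≤ coverN L ρ := by
  refine coverN_le_of_finset_cover f fun s hs ↦ image_subset_iff.2 fun x hx ↦ ?_
  obtain ⟨y, hy, hxy⟩ := mem_iUnion₂.1 (hs hx)
  exact mem_iUnion₂.2 ⟨y, hy, hf.mapsTo_ball hc y ρ hxy⟩

section Family

variable {Ξ : Type*} [MetricSpace Ξ] {Λ : Set Ξ} {F : Ξ → Set X} {ρ : ℝ} {M : ℝ≥0∞}

theorem coverN_biUnion_le_mul (hM : M ≠ 0)
    (h : ∀ c, coverN (⋃ σ ∈ Λ ∩ ball c ρ, F σ) r ≤ M) :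
    coverN (⋃ σ ∈ Λ, F σ) r ≤ coverN Λ ρ * M := by
  rcases eq_or_ne (coverN Λ ρ) ⊤ with htop | hfin
  · simp [htop, ENNReal.top_mul hM]
  obtain ⟨s, hcard, hs⟩ := exists_finset_card_eq_coverN hfin
  have hsub : ⋃ σ ∈ Λ, F σ ⊆ ⋃ c ∈ s, ⋃ σ ∈ Λ ∩ ball c ρ, F σ := iUnion₂_subset fun σ hσ ↦ by
    obtain ⟨c, hc, hσc⟩ := mem_iUnion₂.1 (hs hσ)
    exact subset_iUnion₂_of_subset c hc (subset_biUnion_of_mem (u := F) ⟨hσ, hσc⟩)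
  calc coverN (⋃ σ ∈ Λ, F σ) r
      ≤ ∑ c ∈ s, coverN (⋃ σ ∈ Λ ∩ ball c ρ, F σ) r :=
        (coverN_mono hsub).trans (coverN_biUnion_finset_le s _ r)
    _ ≤ ∑ _c ∈ s, M := Finset.sum_le_sum fun c _ ↦ h c
    _ = coverN Λ ρ * M := by rw [Finset.sum_const, nsmul_eq_mul, hcard]

theorem coverN_biUnion_le_mul_of_forall_dist_lt (hM : M ≠ 0)
    (hF : ∀ σ ∈ Λ, coverN (F σ) r ≤ M)
    (hclose : ∀ σ ∈ Λ, ∀ σ' ∈ Λ, dist σ σ' < 2 * ρ → ∀ x ∈ F σ, ∃ y ∈ F σ', dist x y ≤ δ) :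
    coverN (⋃ σ ∈ Λ, F σ) (r + δ) ≤ coverN Λ ρ * M := by
  refine coverN_biUnion_le_mul hM fun c ↦ ?_
  rcases (Λ ∩ ball c ρ).eq_empty_or_nonempty with hempty | ⟨σ₀, hσ₀, hσ₀c⟩
  · simp [hempty]
  refine (coverN_le_of_forall_exists_dist_le fun x hx ↦ ?_).trans (hF σ₀ hσ₀)
  obtain ⟨σ, ⟨hσ, hσc⟩, hx⟩ := mem_iUnion₂.1 hx
  have hdist : dist σ σ₀ < 2 * ρ := by
    linarith [dist_triangle_right σ σ₀ c, mem_ball.1 hσc, mem_ball.1 hσ₀c]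
  exact hclose σ hσ σ₀ hσ₀ hdist x hx

end Family

theorem coverN_Icc_le (a b : ℝ) {h : ℝ} (hh : 0 < h) :
    coverN (Icc a b) h ≤ ENNReal.ofReal ((b - a) / h) + 1 := by
  classical
  rcases lt_or_ge b a with hba | hab
  · simp [Icc_eq_empty_of_lt hba]
  have hcover : Icc a b ⊆
      ⋃ x ∈ (Finset.range (⌊(b - a) / h⌋₊ + 1)).image (fun j : ℕ ↦ a + j * h), ball x h := by
    rintro x ⟨hax, hxb⟩
    have hfloor : (⌊(x - a) / h⌋₊ : ℝ) * h ≤ x - a :=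
      (le_div_iff₀ hh).1 (Nat.floor_le (div_nonneg (sub_nonneg.2 hax) hh.le))
    have hlt : x - a < (⌊(x - a) / h⌋₊ + 1) * h := (div_lt_iff₀ hh).1 (Nat.lt_floor_add_one _)
    have hj : ⌊(x - a) / h⌋₊ < ⌊(b - a) / h⌋₊ + 1 :=
      Nat.lt_succ_of_le (Nat.floor_mono (by gcongr))
    refine mem_iUnion₂.2 ⟨_, Finset.mem_image_of_mem _ (Finset.mem_range.2 hj), ?_⟩
    rw [mem_ball, Real.dist_eq, abs_lt]
    constructor <;> linarith
  calc coverN (Icc a b) h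
      ≤ (⌊(b - a) / h⌋₊ + 1 : ℕ) := (coverN_le_card hcover).trans <| by
        exact_mod_cast Finset.card_image_le.trans_eq (Finset.card_range _)
    _ ≤ ENNReal.ofReal ((b - a) / h) + 1 := by
        push_cast
        gcongr
        rw [← ENNReal.ofReal_natCast]
        exact ENNReal.ofReal_le_ofReal (Nat.floor_le (div_nonneg (sub_nonneg.2 hab) hh.le))

end CoveringNumber

section PolynomialGrowth

/-- At most polynomial growth in `1 / r` as `r → 0⁺`. For `f = coverN K` this says that `K` has
finite box-counting dimension (`dimBox_ne_top_iff`), and it absorbs all multiplicative constants. -/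
def HasPolyGrowth (f : ℝ → ℝ≥0∞) : Prop :=
  ∃ d : ℕ, ∀ᶠ r in 𝓝[>] 0, f r ≤ ENNReal.ofReal r⁻¹ ^ d

variable {f f' : ℝ → ℝ≥0∞}

theorem eventually_le_ofReal_inv {c : ℝ≥0∞} (hc : c ≠ ⊤) :
    ∀ᶠ r : ℝ in 𝓝[>] 0, c ≤ ENNReal.ofReal r⁻¹ :=
  (ENNReal.tendsto_ofReal_atTop.comp tendsto_inv_nhdsGT_zero).eventually_const_le hc.lt_top

namespace HasPolyGrowth

theorem mono (hf : HasPolyGrowth f) (h : ∀ᶠ r in 𝓝[>] 0, f' r ≤ f r) : HasPolyGrowth f' := by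
  obtain ⟨d, hd⟩ := hf
  exact ⟨d, by filter_upwards [hd, h] with r hr hr' using hr'.trans hr⟩

theorem const {c : ℝ≥0∞} (hc : c ≠ ⊤) : HasPolyGrowth fun _ ↦ c :=
  ⟨1, by simpa only [pow_one] using eventually_le_ofReal_inv hc⟩

theorem ofReal_inv_pow (d : ℕ) : HasPolyGrowth fun r ↦ ENNReal.ofReal r⁻¹ ^ d :=
  ⟨d, .of_forall fun _ ↦ le_rfl⟩

theorem mul (hf : HasPolyGrowth f) (hf' : HasPolyGrowth f') :
    HasPolyGrowth fun r ↦ f r * f' r := by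
  obtain ⟨d, hd⟩ := hf
  obtain ⟨d', hd'⟩ := hf'
  refine ⟨d + d', ?_⟩
  filter_upwards [hd, hd'] with r hr hr'
  rw [pow_add]
  gcongr

theorem add (hf : HasPolyGrowth f) (hf' : HasPolyGrowth f') :
    HasPolyGrowth fun r ↦ f r + f' r := by
  obtain ⟨d, hd⟩ := hf
  obtain ⟨d', hd'⟩ := hf'
  refine ((const ENNReal.ofNat_ne_top).mul (ofReal_inv_pow (max d d'))).mono
    (f := fun r ↦ 2 * ENNReal.ofReal r⁻¹ ^ max d d') ?_
  filter_upwards [hd, hd', eventually_le_ofReal_inv ENNReal.one_ne_top] with r hr hr' hone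
  calc f r + f' r ≤ ENNReal.ofReal r⁻¹ ^ d + ENNReal.ofReal r⁻¹ ^ d' := add_le_add hr hr'
    _ ≤ ENNReal.ofReal r⁻¹ ^ max d d' + ENNReal.ofReal r⁻¹ ^ max d d' := by
        gcongr
        exacts [le_max_left d d', le_max_right d d']
    _ = 2 * ENNReal.ofReal r⁻¹ ^ max d d' := (two_mul _).symm

theorem pow (hf : HasPolyGrowth f) (m : ℕ) : HasPolyGrowth fun r ↦ f r ^ m := by
  obtain ⟨d, hd⟩ := hf
  refine ⟨d * m, ?_⟩
  filter_upwards [hd] with r hr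
  rw [pow_mul]
  gcongr

theorem comp_pow (hf : HasPolyGrowth f) {j : ℕ} (hj : j ≠ 0) :
    HasPolyGrowth fun r ↦ f (r ^ j) := by
  obtain ⟨d, hd⟩ := hf
  have htendsto : Tendsto (fun r : ℝ ↦ r ^ j) (𝓝[>] 0) (𝓝[>] 0) := by
    refine tendsto_nhdsWithin_iff.2
      ⟨?_, eventually_mem_nhdsWithin.mono fun r (hr : 0 < r) ↦ mem_Ioi.2 (pow_pos hr j)⟩
    simpa only [zero_pow hj] using ((continuous_pow j).tendsto (0 : ℝ)).mono_left nhdsWithin_le_nhds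
  refine ⟨j * d, ?_⟩
  filter_upwards [htendsto.eventually hd, self_mem_nhdsWithin] with r hr (hr0 : 0 < r)
  rwa [← inv_pow, ENNReal.ofReal_pow (inv_nonneg.2 hr0.le), ← pow_mul] at hr

theorem ofReal_div_pow (c : ℝ) (m : ℕ) : HasPolyGrowth fun r ↦ ENNReal.ofReal (c / r) ^ m := by
  refine (((const ENNReal.ofReal_ne_top).mul (ofReal_inv_pow 1)).pow m).mono
    (f := fun r ↦ (ENNReal.ofReal c * ENNReal.ofReal r⁻¹ ^ 1) ^ m) ?_
  filter_upwards [self_mem_nhdsWithin] with r (hr : 0 < r)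
  rw [pow_one, ← ENNReal.ofReal_mul' (inv_nonneg.2 hr.le), div_eq_mul_inv]

end HasPolyGrowth

theorem ofReal_log_toReal_div_le_iff {N : ℝ≥0∞} {r : ℝ} (hr0 : 0 < r) (hr1 : r < 1) (d : ℕ) :
    (if N = ⊤ then ⊤ else ENNReal.ofReal (Real.log N.toReal / -Real.log r)) ≤ (d : ℝ≥0∞) ↔
      N ≤ ENNReal.ofReal r⁻¹ ^ d := by
  have hlog : 0 < -Real.log r := neg_pos.2 (Real.log_neg hr0 hr1)
  rw [← ENNReal.ofReal_pow (inv_nonneg.2 hr0.le)]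
  split_ifs with htop
  · simp [htop]
  rw [ENNReal.ofReal_le_natCast, div_le_iff₀ hlog, ← Real.log_inv, ← Real.log_pow,
    ENNReal.le_ofReal_iff_toReal_le htop (by positivity)]
  rcases ENNReal.toReal_nonneg.eq_or_lt with hzero | hpos
  · rw [← hzero, Real.log_zero, Real.log_pow, Real.log_inv]
    exact iff_of_true (by positivity) (by positivity)
  · exact Real.log_le_log_iff hpos (by positivity)

theorem dimBox_ne_top_iff {X : Type*} [MetricSpace X] {K : Set X} :
    dimBox K ≠ ⊤ ↔ HasPolyGrowth (coverN K) := by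
  have hunit : ∀ᶠ r : ℝ in 𝓝[>] 0, r ∈ Ioo 0 1 := Ioo_mem_nhdsGT one_pos
  constructor
  · intro h
    obtain ⟨d, hd⟩ := ENNReal.exists_nat_gt h
    refine ⟨d, ?_⟩
    filter_upwards [hunit, eventually_lt_of_limsup_lt hd] with r hr hlt
    exact (ofReal_log_toReal_div_le_iff hr.1 hr.2 d).1 hlt.le
  · rintro ⟨d, hd⟩
    refine ne_top_of_le_ne_top (ENNReal.natCast_ne_top d) (limsup_le_of_le (by isBoundedDefault) ?_)
    filter_upwards [hunit, hd] with r hr hle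
    exact (ofReal_log_toReal_div_le_iff hr.1 hr.2 d).2 hle

theorem hasPolyGrowth_coverN_Icc (b : ℝ) (i k : ℕ) :
    HasPolyGrowth fun r ↦ coverN (Icc (-r⁻¹ ^ i) b) (r ^ k) := by
  have hbound : HasPolyGrowth fun r ↦
      ENNReal.ofReal b * ENNReal.ofReal r⁻¹ ^ k + ENNReal.ofReal r⁻¹ ^ (i + k) + 1 :=
    (((HasPolyGrowth.const ENNReal.ofReal_ne_top).mul (.ofReal_inv_pow k)).add
      (.ofReal_inv_pow (i + k))).add (.const ENNReal.one_ne_top)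
  refine hbound.mono ?_
  filter_upwards [self_mem_nhdsWithin] with r (hr : 0 < r)
  have hinv : 0 ≤ r⁻¹ := inv_nonneg.2 hr.le
  refine (coverN_Icc_le _ b (pow_pos hr k)).trans ?_
  gcongr
  calc ENNReal.ofReal ((b - -r⁻¹ ^ i) / r ^ k)
      = ENNReal.ofReal (b * r⁻¹ ^ k + r⁻¹ ^ (i + k)) := by
        rw [sub_neg_eq_add, div_eq_mul_inv, ← inv_pow, add_mul, pow_add]
    _ ≤ ENNReal.ofReal b * ENNReal.ofReal r⁻¹ ^ k + ENNReal.ofReal r⁻¹ ^ (i + k) := by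
        refine ENNReal.ofReal_add_le.trans_eq ?_
        rw [ENNReal.ofReal_mul' (pow_nonneg hinv k), ENNReal.ofReal_pow hinv,
          ENNReal.ofReal_pow hinv]

end PolynomialGrowth

section Scales

theorem exists_pow_mul_pow_rpow_lt_rpow (c u : ℝ) {s : ℝ} (hs : 0 < s) :
    ∃ d : ℕ, d ≠ 0 ∧ ∀ᶠ r : ℝ in 𝓝[>] 0, c * (r ^ d) ^ s < r ^ u := by
  obtain ⟨d, hd⟩ := exists_nat_gt (max 0 (u / s))
  have hexp : 0 < d * s - u := sub_pos.2 ((div_lt_iff₀ hs).1 ((le_max_right _ _).trans_lt hd))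
  have htendsto : Tendsto (fun r : ℝ ↦ c * r ^ (d * s - u)) (𝓝[>] 0) (𝓝 0) := by
    have h := ((Real.continuousAt_rpow_const 0 _ (.inr hexp.le)).tendsto.const_mul c)
    rw [Real.zero_rpow hexp.ne', mul_zero] at h
    exact h.mono_left nhdsWithin_le_nhds
  refine ⟨d, by rintro rfl; simp at hd, ?_⟩
  filter_upwards [htendsto.eventually_lt_const one_pos, self_mem_nhdsWithin] with r hr (hr0 : 0 < r)
  calc c * (r ^ d) ^ s = c * r ^ (d * s - u) * r ^ u := by
        rw [mul_assoc, ← Real.rpow_add hr0, sub_add_cancel, Real.rpow_mul hr0.le, Real.rpow_natCast]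
    _ < 1 * r ^ u := by gcongr
    _ = r ^ u := one_mul _

theorem exists_pow_mul_div_rpow_mul_pow_le (c b : ℝ) {a : ℝ} (ha : 0 ≤ a) :
    ∃ j : ℕ, j ≠ 0 ∧ ∀ᶠ r : ℝ in 𝓝[>] 0, c * (a / r) ^ b * (4 * r ^ j) ≤ r / 2 := by
  obtain ⟨j, hj, hlt⟩ := exists_pow_mul_pow_rpow_lt_rpow (8 * c * a ^ b) (b + 1) one_pos
  refine ⟨j, hj, ?_⟩
  filter_upwards [hlt, self_mem_nhdsWithin] with r hltr (hr : 0 < r)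
  calc c * (a / r) ^ b * (4 * r ^ j) = 8 * c * a ^ b * (r ^ j) ^ (1 : ℝ) / r ^ b / 2 := by
        rw [Real.div_rpow ha hr.le, Real.rpow_one]
        ring
    _ ≤ r ^ (b + 1) / r ^ b / 2 := by gcongr
    _ = r / 2 := by rw [← Real.rpow_sub hr, add_sub_cancel_left, Real.rpow_one]

theorem exists_pow_forall_mul_rpow_le {C θ : ℝ} (hC : 0 ≤ C) (hθ : 0 < θ) :
    ∃ k : ℕ, ∀ᶠ r : ℝ in 𝓝[>] 0, ∀ x ∈ Ico 0 (2 * r ^ k), x ≤ 1 ∧ C * x ^ θ ≤ r / 2 := by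
  obtain ⟨k, hk, hlt⟩ := exists_pow_mul_pow_rpow_lt_rpow (2 * C * 2 ^ θ) 1 hθ
  refine ⟨k, ?_⟩
  filter_upwards [hlt, Ioo_mem_nhdsGT one_half_pos] with r hltr ⟨hr, hr1⟩ x ⟨hx, hxlt⟩
  rw [Real.rpow_one] at hltr
  have hle : r ^ k ≤ r := pow_le_of_le_one hr.le (by linarith) hk
  refine ⟨by linarith, ?_⟩
  calc C * x ^ θ ≤ C * (2 * r ^ k) ^ θ := by gcongr
    _ = 2 * C * 2 ^ θ * (r ^ k) ^ θ / 2 := by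
      rw [Real.mul_rpow zero_le_two (by positivity)]
      ring
    _ ≤ r / 2 := by gcongr

theorem exists_pow_forall_lt_pow_of_le_neg_rpow {f : ℝ → ℝ} {c q : ℝ} (hc : 0 ≤ c) (hq : 0 < q)
    (hf : ∀ t < 0, f t ≤ c * (-t) ^ (-q)) (j : ℕ) :
    ∃ i : ℕ, ∀ᶠ r : ℝ in 𝓝[>] 0, ∀ t ≤ -r⁻¹ ^ i, f t < r ^ j := by
  obtain ⟨i, -, hlt⟩ := exists_pow_mul_pow_rpow_lt_rpow c j hq
  refine ⟨i, ?_⟩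
  filter_upwards [hlt, self_mem_nhdsWithin] with r hltr (hr : 0 < r) t ht
  have hpos : 0 < r⁻¹ ^ i := by positivity
  calc f t ≤ c * (-t) ^ (-q) := hf t (by linarith)
    _ ≤ c * (r⁻¹ ^ i) ^ (-q) := by
      gcongr c * ?_
      exact Real.rpow_le_rpow_of_nonpos hpos (by linarith) (by linarith)
    _ = c * (r ^ i) ^ q := by
      rw [inv_pow, Real.inv_rpow (by positivity), Real.rpow_neg (by positivity), inv_inv]
    _ < r ^ j := by rwa [Real.rpow_natCast] at hltr

theorem exp_mul_le_rpow_of_le_mul_logb {β p t₀ x : ℝ} (hβ : 0 ≤ β) (hx : 0 < x)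
    (hp : p ≤ t₀ * Real.logb 2 x) : Real.exp (β * p) ≤ x ^ (β * t₀ / Real.log 2) := by
  rw [Real.rpow_def_of_pos hx, Real.exp_le_exp]
  calc β * p ≤ β * (t₀ * Real.logb 2 x) := by gcongr
    _ = Real.log x * (β * t₀ / Real.log 2) := by rw [Real.logb]; ring

theorem exp_mul_le_inv_mul_neg_rpow {η t : ℝ} (hη : 0 < η) (ht : t < 0) :
    Real.exp (η * t) ≤ η⁻¹ * (-t) ^ (-1 : ℝ) := by
  have hpos : 0 < η * -t := mul_pos hη (neg_pos.2 ht)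
  rw [Real.rpow_neg_one, ← mul_inv, show η * t = -(η * -t) by ring, Real.exp_neg]
  exact inv_anti₀ hpos ((lt_add_one _).le.trans (Real.add_one_le_exp _))

end Scales

namespace EvolSystem

variable {X Ξ : Type*} [MetricSpace X] [MetricSpace Ξ] (sys : EvolSystem X Ξ) {B : Set X} {t₀ : ℝ}
  {σ : Ξ}

theorem th_mem (hσ : σ ∈ sys.Sg) (t : ℝ) : sys.th t σ ∈ sys.Sg :=
  sys.Sg_inv t ▸ mem_image_of_mem _ hσ

theorem U_th_zero (hσ : σ ∈ sys.Sg) (s : ℝ) {p : ℝ} (hp : 0 ≤ p) :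
    sys.U (sys.th s σ) p 0 = sys.U σ (p + s) s := by
  rw [sys.translation σ hσ s p 0 hp, zero_add]

theorem U_succ_mul (hσ : σ ∈ sys.Sg) (ht₀ : 0 ≤ t₀) (n : ℕ) :
    sys.U σ ((n + 1 : ℕ) * t₀) 0 = sys.U (sys.th (n * t₀) σ) t₀ 0 ∘ sys.U σ (n * t₀) 0 := by
  rw [sys.U_th_zero hσ _ ht₀, sys.U_comp σ hσ _ _ _ (by positivity) (by linarith)]
  push_cast
  ring_nf

theorem mapsTo_U_mul (ht₀ : 0 ≤ t₀) (hmaps : ∀ σ ∈ sys.Sg, MapsTo (sys.U σ t₀ 0) B B)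
    (hσ : σ ∈ sys.Sg) (n : ℕ) : MapsTo (sys.U σ (n * t₀) 0) B B := by
  induction n with
  | zero => simpa [sys.U_id σ hσ] using mapsTo_id B
  | succ n ih =>
    rw [sys.U_succ_mul hσ ht₀]
    exact (hmaps _ (sys.th_mem hσ _)).comp ih

end EvolSystem

section Smoothing

variable {X Y : Type*} [NormedAddCommGroup X] [NormedSpace ℝ X] [SeminormedAddCommGroup Y]
  [NormedSpace ℝ Y]

/-- The smoothing property of `S` on `B` with constant `k`: differences of values of `S` lie in
`Y`, viewed inside `X` through `e`, with `Y`-norm controlled by the `X`-norm of the difference of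
the arguments. -/
def IsSmoothingOn (e : Y →ₗ[ℝ] X) (k : ℝ) (S : X → X) (B : Set X) : Prop :=
  ∀ x ∈ B, ∀ y ∈ B, ∃ w : Y, e w = S x - S y ∧ ‖w‖ ≤ k * ‖x - y‖

variable {e : Y →ₗ[ℝ] X} {k R : ℝ} {S : X → X} {B K : Set X} {M : ℝ≥0∞}

theorem IsSmoothingOn.coverN_image_inter_ball_le (hS : IsSmoothingOn e k S B) (hk : 0 < k)
    (hR : 0 < R) (hK : K ⊆ B) (c : X) :
    coverN (S '' (K ∩ ball c R)) (R / 2) ≤ coverN (e '' closedBall 0 1) (1 / (4 * k)) := by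
  rcases (K ∩ ball c R).eq_empty_or_nonempty with hempty | ⟨x₀, hx₀, hx₀c⟩
  · simp [hempty]
  have hpos : 0 < 2 * k * R := by positivity
  have hlip : LipschitzWith (2 * k * R).toNNReal fun z : X ↦ S x₀ + (2 * k * R) • z :=
    LipschitzWith.of_dist_le' fun z z' ↦ by
      rw [dist_add_left, dist_smul₀, Real.norm_of_nonneg hpos.le]
  have hsub : S '' (K ∩ ball c R) ⊆
      (fun z ↦ S x₀ + (2 * k * R) • z) '' (e '' closedBall 0 1) := by
    rintro _ ⟨x, ⟨hx, hxc⟩, rfl⟩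
    obtain ⟨w, hw, hwnorm⟩ := hS x (hK hx) x₀ (hK hx₀)
    have hdist : ‖x - x₀‖ ≤ 2 * R := by
      rw [← dist_eq_norm]
      linarith [dist_triangle_right x x₀ c, mem_ball.1 hxc, mem_ball.1 hx₀c]
    have hball : (2 * k * R)⁻¹ • w ∈ closedBall (0 : Y) 1 := by
      rw [mem_closedBall_zero_iff, norm_smul, norm_inv, Real.norm_of_nonneg hpos.le,
        inv_mul_le_one₀ hpos]
      calc ‖w‖ ≤ k * ‖x - x₀‖ := hwnorm
        _ ≤ k * (2 * R) := by gcongr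
        _ = 2 * k * R := by ring
    refine ⟨_, mem_image_of_mem e hball, ?_⟩
    simp only [map_smul, smul_inv_smul₀ hpos.ne', hw, add_sub_cancel]
  have hradius : R / 2 = ((2 * k * R).toNNReal : ℝ) * (1 / (4 * k)) := by
    rw [Real.coe_toNNReal _ hpos.le]
    field_simp
    norm_num
  rw [hradius]
  exact (coverN_mono hsub).trans
    (coverN_image_le_of_lipschitzWith hlip (Real.toNNReal_pos.2 hpos).ne' _ _)

theorem IsSmoothingOn.coverN_image_le (hS : IsSmoothingOn e k S B) (hk : 0 < k) (hR : 0 < R)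
    (hK : K ⊆ B) (hM : M ≠ 0) (he : coverN (e '' closedBall 0 1) (1 / (4 * k)) ≤ M) :
    coverN (S '' K) (R / 2) ≤ coverN K R * M := by
  rw [image_eq_iUnion]
  refine coverN_biUnion_le_mul hM fun c ↦ ?_
  rw [← image_eq_iUnion]
  exact (hS.coverN_image_inter_ball_le hk hR hK c).trans he

theorem exists_two_pow_mem_Icc {x : ℝ} (hx : 1 ≤ x) :
    ∃ n : ℕ, 1 ≤ n ∧ (2 : ℝ) ^ n ∈ Icc x (2 * x) := by
  obtain ⟨n, hle, hlt⟩ := exists_nat_pow_near hx one_lt_two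
  exact ⟨n + 1, by lia, hlt.le, by rw [pow_succ]; linarith⟩

namespace EvolSystem

variable {Ξ : Type*} [MetricSpace Ξ] (sys : EvolSystem X Ξ) {t₀ : ℝ} {σ : Ξ}

theorem coverN_image_U_mul_le_pow (hk : 0 < k) (ht₀ : 0 ≤ t₀)
    (hmaps : ∀ σ ∈ sys.Sg, MapsTo (sys.U σ t₀ 0) B B)
    (hsmooth : ∀ σ ∈ sys.Sg, IsSmoothingOn e k (sys.U σ t₀ 0) B) (hM : M ≠ 0)
    (he : coverN (e '' closedBall 0 1) (1 / (4 * k)) ≤ M) (hR : 0 < R) {c : X}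
    (hB : B ⊆ ball c R) (hσ : σ ∈ sys.Sg) (n : ℕ) :
    coverN (sys.U σ (n * t₀) 0 '' B) (R / 2 ^ n) ≤ M ^ n := by
  induction n with
  | zero => simpa [sys.U_id σ hσ] using coverN_le_one c hB
  | succ n ih =>
    rw [sys.U_succ_mul hσ ht₀, image_comp, pow_succ, ← div_div, pow_succ]
    refine ((hsmooth _ (sys.th_mem hσ _)).coverN_image_le hk (by positivity)
      (sys.mapsTo_U_mul ht₀ hmaps hσ n).image_subset hM he).trans ?_
    gcongr

theorem exists_time_coverN_image_le (he : TotallyBounded (e '' closedBall 0 1)) (hk : 0 < k)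
    (ht₀ : 0 ≤ t₀) (hmaps : ∀ σ ∈ sys.Sg, MapsTo (sys.U σ t₀ 0) B B)
    (hsmooth : ∀ σ ∈ sys.Sg, IsSmoothingOn e k (sys.U σ t₀ 0) B) {c : X} (hB : B ⊆ ball c R) :
    ∃ m : ℕ, ∀ ε ∈ Ioc 0 R, ∃ p ∈ Icc t₀ (t₀ * Real.logb 2 (2 * R / ε)), ∀ σ ∈ sys.Sg,
      coverN (sys.U σ p 0 '' B) ε ≤ ENNReal.ofReal (2 * R / ε) ^ m := by
  obtain ⟨m, hm⟩ : ∃ m : ℕ, coverN (e '' closedBall 0 1) (1 / (4 * k)) ≤ 2 ^ m := by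
    obtain ⟨m, hm⟩ := ENNReal.exists_nat_gt (coverN_ne_top he (r := 1 / (4 * k)) (by positivity))
    exact ⟨m, hm.le.trans (by exact_mod_cast m.lt_two_pow_self.le)⟩
  refine ⟨m, fun ε ⟨hε, hεR⟩ ↦ ?_⟩
  have hR : 0 < R := hε.trans_le hεR
  obtain ⟨n, hn, hle, hge⟩ := exists_two_pow_mem_Icc ((one_le_div hε).2 hεR)
  rw [← mul_div_assoc] at hge
  refine ⟨n * t₀, ⟨?_, ?_⟩, fun σ hσ ↦ ?_⟩
  · exact le_mul_of_one_le_left ht₀ (by exact_mod_cast hn)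
  · rw [mul_comm]
    gcongr
    rwa [Real.le_logb_iff_rpow_le one_lt_two (by positivity), Real.rpow_natCast]
  calc coverN (sys.U σ (n * t₀) 0 '' B) ε
      ≤ coverN (sys.U σ (n * t₀) 0 '' B) (R / 2 ^ n) :=
        coverN_antitone _ ((div_le_comm₀ hε (by positivity)).1 hle)
    _ ≤ (2 ^ m) ^ n :=
        sys.coverN_image_U_mul_le_pow hk ht₀ hmaps hsmooth (by positivity) hm hR hB hσ n
    _ = ENNReal.ofReal (2 ^ n) ^ m := by
        rw [pow_right_comm, ENNReal.ofReal_pow zero_le_two, ENNReal.ofReal_ofNat]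
    _ ≤ ENNReal.ofReal (2 * R / ε) ^ m := by gcongr

end EvolSystem

end Smoothing

section Attractor

variable {X Ξ : Type*} [MetricSpace X] [MetricSpace Ξ]

theorem coverN_biUnion_image_le_of_infDist_lt {V : Ξ → X → X} {B : Set X} {O S : Set Ξ}
    {ε ρ : ℝ} {M : ℝ≥0∞} (hM : M ≠ 0) (hS : S.Nonempty) (hO : ∀ σ ∈ O, infDist σ S < ρ)
    (hcover : ∀ σ ∈ O, coverN (V σ '' B) ε ≤ M)
    (hclose : ∀ σ ∈ O, ∀ σ' ∈ O, dist σ σ' < 4 * ρ → ∀ x ∈ B, dist (V σ x) (V σ' x) ≤ ε) :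
    coverN (⋃ σ ∈ O, V σ '' B) (ε + ε) ≤ coverN S ρ * M := by
  have hOS : coverN O (ρ + ρ) ≤ coverN S ρ := coverN_le_of_forall_exists_dist_le fun σ hσ ↦
    ((infDist_lt_iff hS).1 (hO σ hσ)).imp fun _ ↦ And.imp_right le_of_lt
  refine (coverN_biUnion_le_mul_of_forall_dist_lt hM hcover ?_).trans (mul_le_mul_left hOS M)
  rintro σ hσ σ' hσ' hdist _ ⟨x, hx, rfl⟩
  exact ⟨_, mem_image_of_mem _ hx, hclose σ hσ σ' hσ' (by linarith) x hx⟩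

theorem coverN_biUnion_le_of_image_eq {V : ℝ → ℝ → X → X} {A : ℝ → Set X} {I : Set ℝ}
    {ε h : ℝ} {M : ℝ≥0∞} (hM : M ≠ 0) (hA : ∀ t s, s ≤ t → V t s '' A s = A t)
    (hcover : ∀ t ∈ I, coverN (A t) ε ≤ M)
    (hclose : ∀ t s, s ≤ t → t < s + 2 * h → ∀ x ∈ A s, dist (V t s x) x ≤ ε) :
    coverN (⋃ t ∈ I, A t) (ε + ε) ≤ coverN I h * M := by
  refine coverN_biUnion_le_mul_of_forall_dist_lt hM hcover fun t _ s _ hts x hx ↦ ?_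
  rw [Real.dist_eq, abs_lt] at hts
  rcases le_total s t with hst | hst
  · rw [← hA t s hst] at hx
    obtain ⟨y, hy, rfl⟩ := hx
    exact ⟨y, hy, hclose t s hst (by linarith) y hy⟩
  · refine ⟨V s t x, hA s t hst ▸ mem_image_of_mem _ hx, ?_⟩
    rw [dist_comm]
    exact hclose s t hst (by linarith) x hx

namespace EvolSystem

variable (sys : EvolSystem X Ξ) {g : Ξ} {A : ℝ → Set X} {B : Set X} {p : ℝ}

theorem subset_image_U_th (hg : g ∈ sys.Sg) (hA : ∀ t s, s ≤ t → sys.U g t s '' A s = A t)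
    (hAB : ∀ t, A t ⊆ B) (hp : 0 ≤ p) (t : ℝ) :
    A t ⊆ sys.U (sys.th (t - p) g) p 0 '' B := by
  rw [sys.U_th_zero hg _ hp, add_sub_cancel, ← hA t (t - p) (sub_le_self t hp)]
  exact image_mono (hAB _)

theorem coverN_biUnion_Iic_le (hg : g ∈ sys.Sg) (hA : ∀ t s, s ≤ t → sys.U g t s '' A s = A t)
    (hAB : ∀ t, A t ⊆ B) (hp : 0 ≤ p) {S : Set Ξ} (hS : S.Nonempty) {ε ρ h a : ℝ} {M : ℝ≥0∞}
    (hM : M ≠ 0) (hcover : ∀ σ ∈ sys.Sg, coverN (sys.U σ p 0 '' B) ε ≤ M)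
    (hpast : ∀ s ≤ a, infDist (sys.th s g) S < ρ)
    (hsymbol : ∀ σ ∈ sys.Sg, ∀ σ' ∈ sys.Sg, dist σ σ' < 4 * ρ →
      ∀ x ∈ B, dist (sys.U σ p 0 x) (sys.U σ' p 0 x) ≤ ε)
    (htime : ∀ t s, s ≤ t → t < s + 2 * h → ∀ x ∈ B, dist (sys.U g t s x) x ≤ ε) (T : ℝ) :
    coverN (⋃ t ∈ Iic T, A t) (ε + ε) ≤ coverN S ρ * M + coverN (Icc a T) h * M := by
  set O := (fun s ↦ sys.th s g) '' Iic a
  have hO : O ⊆ sys.Sg := image_subset_iff.2 fun s _ ↦ sys.th_mem hg s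
  have hAimage := sys.subset_image_U_th hg hA hAB hp
  have hsplit : ⋃ t ∈ Iic T, A t ⊆ (⋃ σ ∈ O, sys.U σ p 0 '' B) ∪ ⋃ t ∈ Icc a T, A t := by
    refine iUnion₂_subset fun t (htT : t ≤ T) ↦ ?_
    rcases le_or_gt (t - p) a with hta | hta
    · exact subset_union_of_subset_left (subset_iUnion₂_of_subset _
        (mem_image_of_mem (fun s ↦ sys.th s g) (mem_Iic.2 hta)) (hAimage t)) _
    · exact subset_union_of_subset_right
        (subset_biUnion_of_mem (u := A) (show t ∈ Icc a T from ⟨by linarith, htT⟩)) _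
  refine (coverN_mono hsplit).trans ((coverN_union_le _ _ _).trans (add_le_add ?_ ?_))
  · exact coverN_biUnion_image_le_of_infDist_lt hM hS (forall_mem_image.2 hpast)
      (fun σ hσ ↦ hcover σ (hO hσ)) fun σ hσ σ' hσ' ↦ hsymbol σ (hO hσ) σ' (hO hσ')
  · exact coverN_biUnion_le_of_image_eq hM hA
      (fun t _ ↦ (coverN_mono (hAimage t)).trans (hcover _ (sys.th_mem hg _)))
      fun t s hst hts x hx ↦ htime t s hst hts x (hAB s hx)

theorem alphaLimit_nonempty (hg : g ∈ sys.Sg) :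
    {σ : Ξ | ∃ tn : ℕ → ℝ, Tendsto tn atTop atBot ∧
      Tendsto (fun n ↦ sys.th (tn n) g) atTop (𝓝 σ)}.Nonempty := by
  obtain ⟨σ, -, φ, hφ, hlim⟩ :=
    sys.Sg_compact.tendsto_subseq fun n : ℕ ↦ sys.th_mem hg (-(n : ℝ))
  exact ⟨σ, _, tendsto_neg_atTop_atBot.comp
    (tendsto_natCast_atTop_atTop.comp hφ.tendsto_atTop), hlim⟩

theorem subset_of_absorbing (hg : g ∈ sys.Sg) (hA : ∀ t s, s ≤ t → sys.U g t s '' A s = A t)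
    (hp : 0 ≤ p) (habsorb : ∀ σ ∈ sys.Sg, sys.U σ p 0 '' (⋃ t, A t) ⊆ B) (t : ℝ) : A t ⊆ B :=
  (sys.subset_image_U_th hg hA (subset_iUnion A) hp t).trans (habsorb _ (sys.th_mem hg _))

end EvolSystem

end Attractor

theorem statement3_general {X Y Ξ : Type*} [NormedAddCommGroup X] [NormedSpace ℝ X]
    [SeminormedAddCommGroup Y] [NormedSpace ℝ Y] [MetricSpace Ξ]
    {e : Y →ₗ[ℝ] X} (he : TotallyBounded (e '' closedBall 0 1))
    (sys : EvolSystem X Ξ) {g : Ξ} (hg : g ∈ sys.Sg)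
    {𝓑 : Set X} (h𝓑 : IsBounded 𝓑)
    {t₀ k : ℝ} (ht₀ : 0 ≤ t₀) (hk : 0 < k)
    (hmaps : ∀ σ ∈ sys.Sg, MapsTo (sys.U σ t₀ 0) 𝓑 𝓑)
    (hsmooth : ∀ σ ∈ sys.Sg, IsSmoothingOn e k (sys.U σ t₀ 0) 𝓑)
    {C θ : ℝ} (hC : 0 ≤ C) (hθ : 0 < θ)
    (htime : ∀ s, ∀ t ∈ Icc s (s + 1), ∀ x ∈ 𝓑, dist (sys.U g t s x) x ≤ C * (t - s) ^ θ)
    {c₁ β : ℝ} (hc₁ : 0 ≤ c₁) (hβ : 0 ≤ β)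
    (hsymbol : ∀ t ≥ t₀, ∀ σ₁ ∈ sys.Sg, ∀ σ₂ ∈ sys.Sg, ∀ x ∈ 𝓑,
      dist (sys.U σ₁ t 0 x) (sys.U σ₂ t 0 x) ≤ c₁ * Real.exp (β * t) * dist σ₁ σ₂)
    {A : ℝ → Set X} (hA : ∀ t s, s ≤ t → sys.U g t s '' A s = A t) (hA𝓑 : ∀ t, A t ⊆ 𝓑)
    {Sm : Set Ξ} (hSm : Sm.Nonempty) (hSmdim : dimBox Sm ≠ ⊤)
    {c₂ q : ℝ} (hc₂ : 0 ≤ c₂) (hq : 0 < q)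
    (hpast : ∀ t < 0, infDist (sys.th t g) Sm ≤ c₂ * (-t) ^ (-q)) (T : ℝ) :
    dimBox (⋃ t ∈ Iic T, A t) ≠ ⊤ := by
  obtain ⟨R, hR, h𝓑R⟩ := h𝓑.subset_ball_lt 0 0
  obtain ⟨m, hcover⟩ := sys.exists_time_coverN_image_le he hk ht₀ hmaps hsmooth h𝓑R
  obtain ⟨j, hj, hsymbolScale⟩ :=
    exists_pow_mul_div_rpow_mul_pow_le c₁ (β * t₀ / Real.log 2) (a := 4 * R) (by positivity)
  obtain ⟨i, hpastScale⟩ := exists_pow_forall_lt_pow_of_le_neg_rpow hc₂ hq hpast j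
  obtain ⟨l, htimeScale⟩ := exists_pow_forall_mul_rpow_le hC hθ
  rw [dimBox_ne_top_iff] at hSmdim ⊢
  have hM := HasPolyGrowth.ofReal_div_pow (4 * R) m
  refine (((hSmdim.comp_pow hj).mul hM).add ((hasPolyGrowth_coverN_Icc T i l).mul hM)).mono ?_
  filter_upwards [hsymbolScale, hpastScale, htimeScale, Ioo_mem_nhdsGT hR]
    with r hsymbol_r hpast_r htime_r ⟨hr, hrR⟩
  obtain ⟨p, ⟨hpt₀, hplog⟩, hcover_p⟩ := hcover (r / 2) ⟨by positivity, by linarith⟩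
  have hradius : 2 * R / (r / 2) = 4 * R / r := by field_simp; norm_num
  rw [hradius] at hplog hcover_p
  have hM0 : ENNReal.ofReal (4 * R / r) ^ m ≠ 0 :=
    pow_ne_zero m (ENNReal.ofReal_pos.2 (by positivity)).ne'
  have hsymbolClose : ∀ σ ∈ sys.Sg, ∀ σ' ∈ sys.Sg, dist σ σ' < 4 * r ^ j →
      ∀ x ∈ 𝓑, dist (sys.U σ p 0 x) (sys.U σ' p 0 x) ≤ r / 2 := fun σ hσ σ' hσ' hdist x hx ↦
    calc dist (sys.U σ p 0 x) (sys.U σ' p 0 x) ≤ c₁ * Real.exp (β * p) * dist σ σ' :=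
          hsymbol p hpt₀ σ hσ σ' hσ' x hx
      _ ≤ c₁ * (4 * R / r) ^ (β * t₀ / Real.log 2) * (4 * r ^ j) := by
        gcongr
        exact exp_mul_le_rpow_of_le_mul_logb hβ (by positivity) hplog
      _ ≤ r / 2 := hsymbol_r
  have htimeClose : ∀ t s, s ≤ t → t < s + 2 * r ^ l → ∀ x ∈ 𝓑,
      dist (sys.U g t s x) x ≤ r / 2 := fun t s hst hts x hx ↦ by
    obtain ⟨hle, hsmall⟩ := htime_r (t - s) ⟨sub_nonneg.2 hst, by linarith⟩
    exact (htime s t ⟨hst, by linarith⟩ x hx).trans hsmall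
  simpa only [add_halves] using sys.coverN_biUnion_Iic_le hg hA hA𝓑 (ht₀.trans hpt₀) hSm hM0
    hcover_p hpast_r hsymbolClose htimeClose T

/-- Corollary: under (H1)-(H5), if only the past asymptotic symbol set `Σ₋`
(compact, invariant, finite dimensional, containing `α(g)`, approached exponentially as
`t → -∞`) is assumed, then for every `T ∈ ℝ` the set `⋃_{t ≤ T} A_g(t)` has finite
box-counting dimension. -/
theorem statement3
    {X Y Ξ : Type*} [NormedAddCommGroup X] [NormedSpace ℝ X] [CompleteSpace X]
    [NormedAddCommGroup Y] [NormedSpace ℝ Y] [CompleteSpace Y] [MetricSpace Ξ]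
    (e : Y →L[ℝ] X) (he_inj : Function.Injective e)
    (he_cpt : IsCompact (closure (⇑e '' Metric.closedBall 0 1)))
    (sys : EvolSystem X Ξ)
    (g : Ξ) (hSg : sys.Sg = closure {x : Ξ | ∃ t : ℝ, sys.th t g = x})
    (hθjoint : Continuous fun p : ℝ × Ξ => sys.th p.1 p.2)
    (𝓑 : Set X) (h𝓑closed : IsClosed 𝓑) (h𝓑bdd : Bornology.IsBounded 𝓑)
    (hAbsorb : ∀ B : Set X, Bornology.IsBounded B → ∃ tB ≥ (0:ℝ), ∀ t ≥ tB, ∀ σ ∈ sys.Sg,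
      sys.U σ t 0 '' B ⊆ 𝓑)
    (τ : ℝ) (hτ : 0 < τ)
    (hSelfAbs : ∀ t ≥ τ, ∀ σ ∈ sys.Sg, sys.U σ t 0 '' 𝓑 ⊆ 𝓑)
    -- (H2) uniform smoothing
    (κ : ℝ → ℝ)
    (hH2 : ∀ t > (0:ℝ), 0 < κ t ∧ ∀ σ ∈ sys.Sg, ∀ x ∈ 𝓑, ∀ y ∈ 𝓑,
      ∃ w : Y, e w = sys.U σ t 0 x - sys.U σ t 0 y ∧ ‖w‖ ≤ κ t * ‖x - y‖)
    -- (H3) uniform Hölder continuity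
    (γ θ : ℝ) (hγ : γ ∈ Set.Ioc (0:ℝ) 1) (hθ : θ ∈ Set.Ioc (0:ℝ) 1)
    (C : ℝ → ℝ)
    (hH3 : ∀ rr : ℝ, 0 < rr → 0 < C rr ∧ ∀ σ ∈ sys.Sg, ∀ s : ℝ,
      ∀ t ∈ Set.Icc (0:ℝ) rr, ∀ t' ∈ Set.Icc (0:ℝ) rr, ∀ x ∈ 𝓑, ∀ y ∈ 𝓑,
      ‖sys.U σ (t + s) s x - sys.U σ (t' + s) s y‖ ≤ C rr * (‖x - y‖ ^ γ + |t - t'| ^ θ))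
    -- (H4) the driving group is exponentially Lipschitz
    (P ζ : ℝ) (hP : 1 ≤ P) (hζ : 0 < ζ)
    (hH4 : ∀ t ≥ (0:ℝ), ∀ ξ₁ ξ₂ : Ξ, dist (sys.th t ξ₁) (sys.th t ξ₂) ≤
      P * Real.exp (ζ * t) * dist ξ₁ ξ₂)
    -- (H5) Lipschitz dependence on the symbol
    (L : ℝ → ℝ) (c₁ β : ℝ) (hc₁ : 0 < c₁) (hβ : 0 < β)
    (hL : ∀ t ≥ (1:ℝ), 1 ≤ L t ∧ L t ≤ c₁ * Real.exp (β * t))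
    (hH5 : ∀ t ≥ (1:ℝ), ∀ σ₁ ∈ sys.Sg, ∀ σ₂ ∈ sys.Sg, ∀ x ∈ 𝓑,
      ‖sys.U σ₁ t 0 x - sys.U σ₂ t 0 x‖ ≤ L t * dist σ₁ σ₂)
    -- the process of `g` has a pullback attractor
    (A : ℝ → Set X) (hA : IsPullbackAttractor (sys.U g) A)
    -- the finite dimensional compact invariant past asymptotic symbol set
    (Sm : Set Ξ) (hSmcpt : IsCompact Sm) (hSminv : ∀ t : ℝ, sys.th t '' Sm = Sm)
    (hSmdim : dimBox Sm ≠ ⊤)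
    (hα : {σ : Ξ | ∃ tn : ℕ → ℝ, Tendsto tn atTop atBot ∧
      Tendsto (fun n => sys.th (tn n) g) atTop (nhds σ)} ⊆ Sm)
    (η₁ cC : ℝ) (hη₁ : 0 < η₁) (hcC : 1 ≤ cC)
    (hdistm : ∀ t : ℝ, Metric.infDist (sys.th t g) Sm ≤ cC * Real.exp (η₁ * t)) :
    ∀ T : ℝ, dimBox (⋃ t ∈ Set.Iic T, A t) ≠ ⊤ := by
  have hg : g ∈ sys.Sg := hSg ▸ subset_closure ⟨0, congrFun sys.th_zero g⟩
  obtain ⟨hκ, hsmooth⟩ := hH2 (max τ 1) (lt_max_of_lt_left hτ)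
  obtain ⟨hC, hHolder⟩ := hH3 1 one_pos
  obtain ⟨tB, htB, habsorb⟩ := hAbsorb _ hA.2.1
  refine statement3_general (e := e.toLinearMap) (he_cpt.totallyBounded.subset subset_closure)
    sys hg h𝓑bdd (zero_le_one.trans (le_max_right τ 1)) hκ
    (fun σ hσ ↦ mapsTo_iff_image_subset.2 (hSelfAbs _ (le_max_left τ 1) σ hσ)) hsmooth hC.le hθ.1
    (fun s t ht x hx ↦ ?_) hc₁.le hβ.le (fun t ht σ₁ hσ₁ σ₂ hσ₂ x hx ↦ ?_) hA.2.2.1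
    (sys.subset_of_absorbing hg hA.2.2.1 htB (habsorb tB le_rfl))
    ((sys.alphaLimit_nonempty hg).mono hα) hSmdim (c₂ := cC * η₁⁻¹) (by positivity) one_pos
    fun t ht ↦ ?_
  · have hts : 0 ≤ t - s := sub_nonneg.2 ht.1
    simpa [dist_eq_norm, sys.U_id g hg, Real.zero_rpow hγ.1.ne', abs_of_nonneg hts] using
      hHolder g hg s (t - s) ⟨hts, by linarith [ht.2]⟩ 0 ⟨le_rfl, zero_le_one⟩ x hx x hx
  · have ht1 : 1 ≤ t := (le_max_right τ 1).trans ht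
    rw [dist_eq_norm]
    exact (hH5 t ht1 σ₁ hσ₁ σ₂ hσ₂ x hx).trans (by gcongr; exact (hL t ht1).2)
  · rw [mul_assoc]
    exact (hdistm t).trans (by gcongr; exact exp_mul_le_inv_mul_neg_rpow hη₁ ht)
end

section
/- Let X be a Banach space and A ⊆ X a nonempty compact set. Then there exists a continuous function g : ℝ → X such that g(t) = 0 for all t ≤ −1 and all t ≥ 2, and A ⊆ g([0,1]). Consequently, if A has infinite box-counting dimension in X, then such a g is bounded with g(ℝ) of infinite box-counting dimension, and its hull H_Ξ(g) in Ξ = C(ℝ,X) has infinite box-counting dimension. -/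
open Filter Set Metric
open scoped ENNReal NNReal Topology

/-- `d^{(n)}(ξ₁,ξ₂) = max_{s ∈ [-n,n]} ‖ξ₁(s) - ξ₂(s)‖`. -/
noncomputable def dseg {X : Type*} [NormedAddCommGroup X] (n : ℕ) (ξ₁ ξ₂ : C(ℝ, X)) : ℝ :=
  sSup ((fun s => ‖ξ₁ s - ξ₂ s‖) '' Set.Icc (-(n:ℝ)) (n:ℝ))

/-- The Fréchet metric on `Ξ = C(ℝ,X)`:
`d_Ξ(ξ₁,ξ₂) = Σₙ 2⁻ⁿ d⁽ⁿ⁾(ξ₁,ξ₂)/(1 + d⁽ⁿ⁾(ξ₁,ξ₂))`. -/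
noncomputable def dXi {X : Type*} [NormedAddCommGroup X] (ξ₁ ξ₂ : C(ℝ, X)) : ℝ :=
  ∑' n : ℕ, (1 / 2 ^ n : ℝ) * (dseg n ξ₁ ξ₂ / (1 + dseg n ξ₁ ξ₂))

/-- The translation group `(θ_t ξ)(s) = ξ(t+s)` on `C(ℝ,X)`. -/
noncomputable def shift {X : Type*} [NormedAddCommGroup X] (t : ℝ) (ξ : C(ℝ, X)) : C(ℝ, X) :=
  ξ.comp ⟨fun s => t + s, by continuity⟩

/-- Covering number of a subset of `Ξ = C(ℝ,X)` by `dXi`-balls of radius `r`. -/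
noncomputable def coverNXi {X : Type*} [NormedAddCommGroup X] (K : Set C(ℝ, X)) (r : ℝ) :
    ℝ≥0∞ :=
  sInf {n : ℝ≥0∞ | ∃ s : Finset C(ℝ, X), (s.card : ℝ≥0∞) = n ∧
    ∀ ξ ∈ K, ∃ c ∈ s, dXi c ξ < r}

/-- Box-counting dimension in `(Ξ, d_Ξ)`. -/
noncomputable def dimBoxXi {X : Type*} [NormedAddCommGroup X] (K : Set C(ℝ, X)) : ℝ≥0∞ :=
  Filter.limsup (fun r : ℝ =>
    if coverNXi K r = ⊤ then (⊤ : ℝ≥0∞)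
    else ENNReal.ofReal (Real.log (coverNXi K r).toReal / (-Real.log r)))
    (nhdsWithin 0 (Set.Ioi 0))

/-- The hull of `g` in `(Ξ, d_Ξ)`: the `d_Ξ`-closure of the orbit `{θ_t g : t ∈ ℝ}`. -/
def hullXi {X : Type*} [NormedAddCommGroup X] (g : C(ℝ, X)) : Set C(ℝ, X) :=
  {ξ : C(ℝ, X) | ∀ ε > (0:ℝ), ∃ t : ℝ, dXi (shift t g) ξ < ε}

/-!
By Hausdorff–Alexandroff, `A` is a continuous image of the Cantor set. Dugundji's construction
extends this map to `ℝ`: a point off the Cantor set is sent, via a partition of unity, into the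
convex hull of the values at nearby Cantor points. It replaces the affine interpolation on gaps,
and a Urysohn function does the cutting off.

The evaluation `ξ ↦ ξ 0` maps the orbit of `g` onto `range g`. Only the term `n = 0` of the Fréchet
metric is needed to see that it sends `dXi`-balls of small radius `r` into balls of radius `2 * r`,
and the factor `2` is invisible to the box-counting dimension since `log (2 * r) / log r → 1`.
-/

section Dugundji

variable {X E : Type*} [PseudoMetricSpace X] [AddCommGroup E] [Module ℝ E] [TopologicalSpace E]
  {C : Set X}

/-- The convex set in which Dugundji's extension of `f : C(C, E)` takes its value at `x`. The
inequality is not strict, so that for `x ∈ C` the set contains `f x`. -/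
def dugundjiHull (f : C(C, E)) (x : X) : Set E :=
  convexHull ℝ (f '' {c | dist x c ≤ 2 * infDist x C})

theorem apply_mem_dugundjiHull (f : C(C, E)) (c : C) : f c ∈ dugundjiHull f (c : X) :=
  subset_convexHull ℝ _ ⟨c, by simp [infDist_zero_of_mem c.2], rfl⟩

theorem exists_eventually_mem_dugundjiHull (hC : IsClosed C) (hne : C.Nonempty) (f : C(C, E))
    {x : X} (hx : x ∉ C) : ∃ e : E, ∀ᶠ y in 𝓝 x, e ∈ dugundjiHull f y := by
  have hpos : 0 < infDist x C := (hC.notMem_iff_infDist_pos hne).1 hx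
  obtain ⟨c, hc, hxc⟩ := (infDist_lt_iff hne).1 (lt_two_mul_self hpos)
  refine ⟨f ⟨c, hc⟩, ?_⟩
  have hnear : ∀ᶠ y in 𝓝 x, dist y c < 2 * infDist y C :=
    (isOpen_lt (by fun_prop) (by fun_prop)).mem_nhds hxc
  filter_upwards [hnear] with y hy
  exact subset_convexHull ℝ _ ⟨⟨c, hc⟩, hy.le, rfl⟩

theorem eventually_dugundjiHull_subset [LocallyConvexSpace ℝ E] (f : C(C, E)) (c : C) {U : Set E}
    (hU : U ∈ 𝓝 (f c)) : ∀ᶠ y in 𝓝 (c : X), dugundjiHull f y ⊆ U := by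
  obtain ⟨V, ⟨hV, hVconvex⟩, hVU⟩ := (LocallyConvexSpace.convex_basis (𝕜 := ℝ) (f c)).mem_iff.1 hU
  obtain ⟨δ, hδ, hball⟩ := Metric.mem_nhds_iff.1 (f.continuous.continuousAt hV)
  filter_upwards [ball_mem_nhds (c : X) (div_pos hδ three_pos)] with y hy
  refine (convexHull_min ?_ hVconvex).trans hVU
  rintro _ ⟨c', hc', rfl⟩
  refine hball (show dist (c' : X) c < δ from ?_)
  calc dist (c' : X) c ≤ dist y c' + dist y c := dist_triangle_left _ _ _
    _ ≤ 2 * dist y c + dist y c := by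
      gcongr
      exact hc'.trans (by gcongr; exact infDist_le_dist_of_mem c.2)
    _ < δ := by linarith [mem_ball.1 hy]

variable [ContinuousAdd E] [ContinuousSMul ℝ E] [LocallyConvexSpace ℝ E]

theorem exists_restrict_eq_of_isClosed (hC : IsClosed C) (f : C(C, E)) :
    ∃ g : C(X, E), g.restrict C = f := by
  classical
  rcases C.eq_empty_or_nonempty with rfl | hne
  · exact ⟨0, ContinuousMap.ext fun c => c.2.elim⟩
  obtain ⟨G, hG⟩ : ∃ G : C((Cᶜ : Set X), E), ∀ x : (Cᶜ : Set X), G x ∈ dugundjiHull f x := by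
    refine exists_continuous_forall_mem_convex_of_local_const (fun x => convex_convexHull ℝ _) ?_
    intro x
    obtain ⟨e, he⟩ := exists_eventually_mem_dugundjiHull hC hne f x.2
    exact ⟨e, continuous_subtype_val.continuousAt.eventually he⟩
  let g : X → E := fun x => if h : x ∈ C then f ⟨x, h⟩ else G ⟨x, h⟩
  have hgC (c : C) : g c = f c := dif_pos c.2
  have hgG (x : (Cᶜ : Set X)) : g x = G x := dif_neg x.2
  have hg (x : X) : g x ∈ dugundjiHull f x := by
    by_cases hx : x ∈ C
    · exact hgC ⟨x, hx⟩ ▸ apply_mem_dugundjiHull f ⟨x, hx⟩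
    · exact hgG ⟨x, hx⟩ ▸ hG ⟨x, hx⟩
  refine ⟨⟨g, continuous_iff_continuousAt.2 fun x => ?_⟩, ContinuousMap.ext hgC⟩
  by_cases hx : x ∈ C
  · intro U hU
    have hsub := eventually_dugundjiHull_subset f ⟨x, hx⟩ (hgC ⟨x, hx⟩ ▸ hU)
    exact hsub.mono fun y hy => hy (hg y)
  · have hgon : ContinuousOn g Cᶜ :=
      continuousOn_iff_continuous_domRestrict.2 (G.continuous.congr fun x => (hgG x).symm)
    exact hgon.continuousAt (hC.isOpen_compl.mem_nhds hx)

theorem exists_restrict_eq_eqOn_zero {D : Set X} (hC : IsClosed C) (hD : IsClosed D)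
    (hCD : Disjoint C D) (f : C(C, E)) : ∃ g : C(X, E), g.restrict C = f ∧ EqOn g 0 D := by
  obtain ⟨g, rfl⟩ := exists_restrict_eq_of_isClosed hC f
  obtain ⟨φ, hφD, hφC, -⟩ := exists_continuous_zero_one_of_isClosed hD hC hCD.symm
  refine ⟨φ • g, ContinuousMap.ext fun c => ?_, fun x hx => ?_⟩
  · simp [hφC c.2]
  · simp [hφD hx]

end Dugundji

section CantorSet

theorem exists_continuousMap_cantorSet_range_eq {Y : Type*} [TopologicalSpace Y]
    [TopologicalSpace.MetrizableSpace Y] {A : Set Y} (hA : IsCompact A) (hne : A.Nonempty) :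
    ∃ f : C(cantorSet, Y), range f = A := by
  let := TopologicalSpace.metrizableSpaceMetric Y
  have : Nonempty A := hne.to_subtype
  have : CompactSpace A := isCompact_iff_compactSpace.1 hA
  obtain ⟨p, hp, hsurj⟩ := exists_nat_bool_continuous_surjective_of_compact A
  refine ⟨⟨fun c => p (cantorSetHomeomorphNatToBool c), by fun_prop⟩, ?_⟩
  have hq := hsurj.comp cantorSetHomeomorphNatToBool.surjective
  exact (hq.range_comp Subtype.val).trans Subtype.range_coe

theorem exists_continuousMap_real_subset_image_Icc {E : Type*} [AddCommGroup E] [Module ℝ E]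
    [TopologicalSpace E] [TopologicalSpace.MetrizableSpace E] [ContinuousAdd E]
    [ContinuousSMul ℝ E] [LocallyConvexSpace ℝ E] {A : Set E} (hA : IsCompact A)
    (hne : A.Nonempty) {D : Set ℝ} (hD : IsClosed D) (hdisj : Disjoint (Icc 0 1) D) :
    ∃ g : C(ℝ, E), EqOn g 0 D ∧ A ⊆ g '' Icc 0 1 := by
  obtain ⟨f, rfl⟩ := exists_continuousMap_cantorSet_range_eq hA hne
  obtain ⟨g, rfl, hgD⟩ := exists_restrict_eq_eqOn_zero isClosed_cantorSet hD
    (hdisj.mono_left cantorSet_subset_unitInterval) f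
  refine ⟨g, hgD, ?_⟩
  rintro _ ⟨c, rfl⟩
  exact ⟨c, cantorSet_subset_unitInterval c.2, rfl⟩

end CantorSet

section BoxExponent

/-- The quotient `log N(r) / (-log r)` of a covering number `N(r)`, infinite when `N(r)` is. -/
noncomputable def boxRatio (N : ℝ → ℝ≥0∞) (r : ℝ) : ℝ≥0∞ :=
  if N r = ⊤ then ⊤ else ENNReal.ofReal (Real.log (N r).toReal / (-Real.log r))

/-- The upper growth exponent of covering numbers `N(r)` as `r → 0⁺`; this is the common form of
`dimBox` and `dimBoxXi`. -/
noncomputable def boxExponent (N : ℝ → ℝ≥0∞) : ℝ≥0∞ :=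
  limsup (boxRatio N) (𝓝[>] 0)

variable {M N : ℝ → ℝ≥0∞}

theorem boxRatio_le_boxRatio {r : ℝ} (hr₀ : 0 ≤ r) (hr₁ : r ≤ 1) (h : M r ≤ N r) :
    boxRatio M r ≤ boxRatio N r := by
  by_cases hN : N r = ⊤
  · simp [boxRatio, hN]
  have hM : M r ≠ ⊤ := ne_top_of_le_ne_top hN h
  rw [boxRatio, boxRatio, if_neg hM, if_neg hN]
  rcases (ENNReal.toReal_nonneg (a := M r)).eq_or_lt with h0 | hpos
  · simp [← h0]
  · have hlog : 0 ≤ -Real.log r := neg_nonneg.2 (Real.log_nonpos hr₀ hr₁)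
    gcongr

theorem boxExponent_mono (h : ∀ᶠ r in 𝓝[>] 0, M r ≤ N r) : boxExponent M ≤ boxExponent N := by
  refine limsup_le_limsup ?_
  filter_upwards [h, Ioo_mem_nhdsGT one_pos] with r hMN hr
  exact boxRatio_le_boxRatio hr.1.le hr.2.le hMN

theorem boxRatio_mul_left {c r : ℝ} (hr : Real.log r < 0) (hcr : Real.log (c * r) < 0) :
    boxRatio N (c * r) =
      boxRatio (fun ρ => N (c * ρ)) r * ENNReal.ofReal (Real.log r / Real.log (c * r)) := by
  have hpos : 0 < Real.log r / Real.log (c * r) := div_pos_of_neg_of_neg hr hcr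
  by_cases hN : N (c * r) = ⊤
  · simp [boxRatio, hN, ENNReal.top_mul, hpos]
  · simp only [boxRatio, if_neg hN]
    rw [← ENNReal.ofReal_mul' hpos.le]
    congr 1
    field_simp [hr.ne, hcr.ne]

theorem tendsto_log_div_log_mul_left {c : ℝ} (hc : c ≠ 0) :
    Tendsto (fun r => Real.log r / Real.log (c * r)) (𝓝[>] 0) (𝓝 1) := by
  have hinv : Tendsto (fun r => (Real.log c / Real.log r + 1)⁻¹) (𝓝[>] 0) (𝓝 1) := by
    simpa using ((Real.tendsto_log_nhdsGT_zero.const_div_atBot (Real.log c)).add_const 1).inv₀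
      (by simp)
  refine hinv.congr' ?_
  filter_upwards [Ioo_mem_nhdsGT one_pos] with r hr
  have hlog : Real.log r ≠ 0 := (Real.log_neg hr.1 hr.2).ne
  rw [Real.log_mul hc hr.1.ne', div_add_one hlog, inv_div]

theorem map_mul_left_nhdsGT_zero {c : ℝ} (hc : 0 < c) : map (c * ·) (𝓝[>] 0) = 𝓝[>] 0 := by
  conv_lhs => rw [← comap_mulLeft_nhdsGT_zero hc]
  exact map_comap_of_surjective (mul_left_surjective₀ hc.ne') _

theorem boxExponent_le_boxExponent_comp_mul_left {c : ℝ} (hc : 0 < c) :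
    boxExponent N ≤ boxExponent fun r => N (c * r) := by
  have hlimsup : limsup (fun r => ENNReal.ofReal (Real.log r / Real.log (c * r))) (𝓝[>] 0) = 1 := by
    simpa using (ENNReal.tendsto_ofReal (tendsto_log_div_log_mul_left hc.ne')).limsup_eq
  have hlog : ∀ᶠ r in 𝓝[>] 0, Real.log r < 0 :=
    Real.tendsto_log_nhdsGT_zero.eventually_lt_atBot 0
  have hlogc : ∀ᶠ r in 𝓝[>] 0, Real.log (c * r) < 0 :=
    eventually_map.1 ((map_mul_left_nhdsGT_zero hc).symm ▸ hlog)
  calc boxExponent N = limsup (boxRatio N) (map (c * ·) (𝓝[>] 0)) := by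
        rw [map_mul_left_nhdsGT_zero hc, boxExponent]
    _ = limsup (boxRatio (fun ρ => N (c * ρ)) *
          fun r => ENNReal.ofReal (Real.log r / Real.log (c * r))) (𝓝[>] 0) :=
        limsup_congr (hlog.mp (hlogc.mono fun _ hcr hr => boxRatio_mul_left hr hcr))
    _ ≤ boxExponent (fun r => N (c * r)) * 1 := by
        rw [← hlimsup]
        exact ENNReal.limsup_mul_le' (by simp [hlimsup]) (by simp [hlimsup])
    _ = boxExponent fun r => N (c * r) := mul_one _

end BoxExponent

theorem dimBox_eq_boxExponent {X : Type*} [MetricSpace X] (K : Set X) :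
    dimBox K = boxExponent (coverN K) :=
  rfl

theorem coverN_mono_s17 {X : Type*} [MetricSpace X] {K L : Set X} (h : K ⊆ L) (r : ℝ) :
    coverN K r ≤ coverN L r :=
  sInf_le_sInf fun _ ⟨s, hcard, hs⟩ => ⟨s, hcard, h.trans hs⟩

theorem dimBox_mono {X : Type*} [MetricSpace X] {K L : Set X} (h : K ⊆ L) :
    dimBox K ≤ dimBox L :=
  boxExponent_mono (Eventually.of_forall (coverN_mono_s17 h))

section Frechet

variable {X : Type*} [NormedAddCommGroup X]

theorem dimBoxXi_eq_boxExponent (K : Set C(ℝ, X)) : dimBoxXi K = boxExponent (coverNXi K) :=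
  rfl

theorem dseg_nonneg (n : ℕ) (ξ η : C(ℝ, X)) : 0 ≤ dseg n ξ η :=
  Real.sSup_nonneg (forall_mem_image.2 fun _ _ => norm_nonneg _)

theorem dseg_self (n : ℕ) (ξ : C(ℝ, X)) : dseg n ξ ξ = 0 :=
  le_antisymm (Real.sSup_nonpos (forall_mem_image.2 fun s _ => by simp)) (dseg_nonneg n ξ ξ)

theorem dseg_zero (ξ η : C(ℝ, X)) : dseg 0 ξ η = ‖ξ 0 - η 0‖ := by
  simp [dseg]

theorem dXi_self (ξ : C(ℝ, X)) : dXi ξ ξ = 0 := by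
  simp [dXi, dseg_self]

theorem dXi_term_nonneg (n : ℕ) (ξ η : C(ℝ, X)) :
    0 ≤ (1 / 2 ^ n : ℝ) * (dseg n ξ η / (1 + dseg n ξ η)) := by
  have := dseg_nonneg n ξ η
  positivity

theorem summable_dXi_term (ξ η : C(ℝ, X)) :
    Summable fun n : ℕ => (1 / 2 ^ n : ℝ) * (dseg n ξ η / (1 + dseg n ξ η)) := by
  refine summable_geometric_two.of_nonneg_of_le (fun n => dXi_term_nonneg n ξ η) fun n => ?_
  rw [one_div_pow]
  have hd := dseg_nonneg n ξ η
  exact mul_le_of_le_one_right (by positivity) (div_le_one_of_le₀ (by linarith) (by linarith))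

theorem dseg_div_le_dXi (n : ℕ) (ξ η : C(ℝ, X)) :
    (1 / 2 ^ n : ℝ) * (dseg n ξ η / (1 + dseg n ξ η)) ≤ dXi ξ η :=
  (summable_dXi_term ξ η).le_tsum n fun m _ => dXi_term_nonneg m ξ η

theorem norm_apply_zero_sub_lt {ξ η : C(ℝ, X)} {r : ℝ} (hr : r ≤ 1 / 2) (h : dXi ξ η < r) :
    ‖ξ 0 - η 0‖ < 2 * r := by
  have hle : ‖ξ 0 - η 0‖ / (1 + ‖ξ 0 - η 0‖) ≤ dXi ξ η := by
    simpa [dseg_zero] using dseg_div_le_dXi 0 ξ η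
  have hlt := hle.trans_lt h
  rw [div_lt_iff₀ (by positivity)] at hlt
  nlinarith [norm_nonneg (ξ 0 - η 0)]

theorem coverN_image_eval_zero_le (K : Set C(ℝ, X)) {r : ℝ} (hr : r ≤ 1 / 2) :
    coverN ((fun ξ => ξ 0) '' K) (2 * r) ≤ coverNXi K r := by
  classical
  refine le_sInf ?_
  rintro _ ⟨s, rfl, hs⟩
  have hcover : (fun ξ : C(ℝ, X) => ξ 0) '' K ⊆ ⋃ x ∈ s.image fun c => c 0, ball x (2 * r) := by
    rintro _ ⟨ξ, hξ, rfl⟩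
    obtain ⟨c, hc, hcξ⟩ := hs ξ hξ
    refine mem_iUnion₂.2 ⟨c 0, Finset.mem_image_of_mem _ hc, ?_⟩
    simpa [mem_ball, dist_eq_norm'] using norm_apply_zero_sub_lt hr hcξ
  calc coverN ((fun ξ => ξ 0) '' K) (2 * r) ≤ ((s.image fun c => c 0).card : ℝ≥0∞) :=
        sInf_le ⟨_, rfl, hcover⟩
    _ ≤ s.card := mod_cast Finset.card_image_le

theorem dimBox_image_eval_zero_le (K : Set C(ℝ, X)) :
    dimBox ((fun ξ => ξ 0) '' K) ≤ dimBoxXi K := by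
  rw [dimBox_eq_boxExponent, dimBoxXi_eq_boxExponent]
  refine (boxExponent_le_boxExponent_comp_mul_left two_pos).trans (boxExponent_mono ?_)
  filter_upwards [Ioo_mem_nhdsGT (half_pos one_pos)] with r hr
  exact coverN_image_eval_zero_le K hr.2.le

theorem shift_mem_hullXi (g : C(ℝ, X)) (t : ℝ) : shift t g ∈ hullXi g :=
  fun _ hε => ⟨t, (dXi_self _).trans_lt hε⟩

theorem range_subset_image_eval_zero_hullXi (g : C(ℝ, X)) :
    range g ⊆ (fun ξ : C(ℝ, X) => ξ 0) '' hullXi g :=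
  range_subset_iff.2 fun t => ⟨shift t g, shift_mem_hullXi g t, by simp [shift]⟩

theorem dimBox_range_le_dimBoxXi_hullXi (g : C(ℝ, X)) : dimBox (range g) ≤ dimBoxXi (hullXi g) :=
  (dimBox_mono (range_subset_image_eval_zero_hullXi g)).trans (dimBox_image_eval_zero_le _)

end Frechet

theorem statement17_general {X : Type*} [NormedAddCommGroup X] [NormedSpace ℝ X]
    (A : Set X) (hAcpt : IsCompact A) (hAne : A.Nonempty) :
    ∃ g : C(ℝ, X), (∀ t : ℝ, t ≤ -1 → g t = 0) ∧ (∀ t : ℝ, 2 ≤ t → g t = 0) ∧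
      A ⊆ ⇑g '' Set.Icc (0:ℝ) 1 ∧
      (∃ M : ℝ, ∀ t : ℝ, ‖g t‖ ≤ M) ∧
      dimBox A ≤ dimBox (Set.range ⇑g) ∧
      dimBox (Set.range ⇑g) ≤ dimBoxXi (hullXi g) := by
  have hdisj : Disjoint (Icc (0 : ℝ) 1) (Iic (-1) ∪ Ici 2) :=
    disjoint_left.2 fun t ht => by
      rintro (h | h)
      · linarith [ht.1, mem_Iic.1 h]
      · linarith [ht.2, mem_Ici.1 h]
  obtain ⟨g, hg, hA⟩ := exists_continuousMap_real_subset_image_Icc hAcpt hAne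
    (isClosed_Iic.union isClosed_Ici) hdisj
  have hsupp : HasCompactSupport g := by
    refine HasCompactSupport.intro (isCompact_Icc (a := -1) (b := 2)) fun t ht => hg ?_
    rw [mem_Icc, not_and_or, not_le, not_le] at ht
    exact ht.imp le_of_lt le_of_lt
  exact ⟨g, fun t ht => hg (.inl ht), fun t ht => hg (.inr ht), hA,
    g.continuous.bounded_above_of_compact_support hsupp,
    dimBox_mono (hA.trans (image_subset_range _ _)), dimBox_range_le_dimBoxXi_hullXi g⟩

/-- for every nonempty compact `A ⊆ X` there is a continuous `g : ℝ → X`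
vanishing outside `[-1,2]` with `A ⊆ g([0,1])`; consequently, if `A` has infinite box-counting
dimension, such a `g` is bounded, its range has infinite box-counting dimension, and its hull
`H_Ξ(g)` has infinite box-counting dimension in `(Ξ, d_Ξ)`. -/
theorem statement17 {X : Type*} [NormedAddCommGroup X] [NormedSpace ℝ X] [CompleteSpace X]
    (A : Set X) (hAcpt : IsCompact A) (hAne : A.Nonempty) :
    ∃ g : C(ℝ, X), (∀ t : ℝ, t ≤ -1 → g t = 0) ∧ (∀ t : ℝ, 2 ≤ t → g t = 0) ∧
      A ⊆ ⇑g '' Set.Icc (0:ℝ) 1 ∧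
      (dimBox A = ⊤ →
        (∃ M : ℝ, ∀ t : ℝ, ‖g t‖ ≤ M) ∧
        dimBox (Set.range ⇑g) = ⊤ ∧
        dimBoxXi (hullXi g) = ⊤) := by
  obtain ⟨g, hleft, hright, hA, hbdd, hrange, hhull⟩ := statement17_general A hAcpt hAne
  exact ⟨g, hleft, hright, hA, fun h => ⟨hbdd, top_unique (h ▸ hrange),
    top_unique (h ▸ hrange.trans hhull)⟩⟩
end
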